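/- arXiv:1209.3510 — 2 statements merged into one kernel-verified Lean document; each statement's English description precedes it below -/
import Mathlib

section
/- Let U ⊆ ℝ³ be an open neighbourhood of 0, let w : U → ℝ³ be differentiable with w(0) = 0, and define the frame e_j^α(x) as the entries of the matrix E(x) := [[1, w³(x), −w²(x)], [−w³(x), 1, w¹(x)], [w²(x), −w¹(x), 1]] (the j-th row of E(x) being e_j(x)), assumed pointwise invertible on U. Define g^{αβ} := Σ_j e_j^α e_j^β, its inverse g_{αβ}, σ^α := Σ_j e_j^α s^j, σ_β := Σ_α g_{βα} σ^α, the Christoffel symbols Γ(β;αγ) := (1/2) Σ_δ g^{βδ}(∂g_{γδ}/∂x^α + ∂g_{αδ}/∂x^γ − ∂g_{αγ}/∂x^δ), A₀ := −(i/4) Σ_{α,β} σ^α σ_β (∂σ^β/∂x^α + Σ_γ Γ(β;αγ)σ^γ) + (i/2) Σ_{α,β} σ^α Γ(β;αβ), and A_sub := A₀ + (i/2) Σ_α ∂σ^α/∂x^α. Then A_sub(0) = −(1/2) (div w)(0) · I, where div w = Σ_α ∂w^α/∂x^α and I is the 2×2 identity matrix. -/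
open Complex Matrix BigOperators

noncomputable section

/-- The Pauli matrices s¹, s², s³. -/
def pauli : Fin 3 → Matrix (Fin 2) (Fin 2) ℂ :=
  ![!![0, 1; 1, 0], !![0, -Complex.I; Complex.I, 0], !![1, 0; 0, -1]]

/-- Partial derivative at the origin of a real-valued function on ℝ³. -/
def pdR (f : (Fin 3 → ℝ) → ℝ) (α : Fin 3) : ℝ := fderiv ℝ f 0 (Pi.single α 1)

/-- Partial derivative at the origin of a complex-valued function on ℝ³. -/
def pdC (f : (Fin 3 → ℝ) → ℂ) (α : Fin 3) : ℂ := fderiv ℝ f 0 (Pi.single α 1)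

/-- The frame matrix E(x) (linearization of an orthogonal matrix about the identity),
whose j-th row is the frame vector e_j(x); w is the vector of microrotations. -/
def Emat (w : (Fin 3 → ℝ) → Fin 3 → ℝ) (x : Fin 3 → ℝ) : Matrix (Fin 3) (Fin 3) ℝ :=
  !![1, w x 2, -(w x 1); -(w x 2), 1, w x 0; w x 1, -(w x 0), 1]

/-- The contravariant metric g^{αβ} = Σ_j e_j^α e_j^β. -/
def gM (w : (Fin 3 → ℝ) → Fin 3 → ℝ) (x : Fin 3 → ℝ) : Matrix (Fin 3) (Fin 3) ℝ :=
  Matrix.of fun α β => ∑ j, Emat w x j α * Emat w x j β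

/-- The covariant metric g_{αβ}, inverse matrix of g^{αβ}. -/
def glM (w : (Fin 3 → ℝ) → Fin 3 → ℝ) (x : Fin 3 → ℝ) : Matrix (Fin 3) (Fin 3) ℝ :=
  (gM w x)⁻¹

/-- The Pauli matrices σ^α = Σ_j e_j^α s^j of the frame. -/
def sigma' (w : (Fin 3 → ℝ) → Fin 3 → ℝ) (x : Fin 3 → ℝ) (α : Fin 3) :
    Matrix (Fin 2) (Fin 2) ℂ :=
  ∑ j, ((Emat w x j α : ℝ) : ℂ) • pauli j

/-- σ_β = Σ_α g_{βα} σ^α. -/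
def sigmaLow (w : (Fin 3 → ℝ) → Fin 3 → ℝ) (x : Fin 3 → ℝ) (β : Fin 3) :
    Matrix (Fin 2) (Fin 2) ℂ :=
  ∑ α, ((glM w x β α : ℝ) : ℂ) • sigma' w x α

/-- The Christoffel symbols Γ(β;αγ) at the origin. -/
def christoffel (w : (Fin 3 → ℝ) → Fin 3 → ℝ) (β α γ : Fin 3) : ℝ :=
  (1 / 2) * ∑ δ, gM w 0 β δ *
    (pdR (fun y => glM w y γ δ) α + pdR (fun y => glM w y α δ) γ - pdR (fun y => glM w y α γ) δ)

/-- ∂σ^β/∂x^α at the origin (entrywise). -/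
def Dsigma (w : (Fin 3 → ℝ) → Fin 3 → ℝ) (α β : Fin 3) : Matrix (Fin 2) (Fin 2) ℂ :=
  Matrix.of fun i j => pdC (fun y => sigma' w y β i j) α

/-- The zero-order part A₀ of the massless Dirac operator on half-densities, at the origin. -/
def A0 (w : (Fin 3 → ℝ) → Fin 3 → ℝ) : Matrix (Fin 2) (Fin 2) ℂ :=
  (-(Complex.I / 4)) • (∑ α, ∑ β, sigma' w 0 α * sigmaLow w 0 β *
      (Dsigma w α β + ∑ γ, ((christoffel w β α γ : ℝ) : ℂ) • sigma' w 0 γ))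
    + (Complex.I / 2) • (∑ α, ∑ β, ((christoffel w β α β : ℝ) : ℂ) • sigma' w 0 α)

/-- The subprincipal symbol A_sub = A₀ + (i/2) Σ_α ∂σ^α/∂x^α, at the origin. -/
def Asub (w : (Fin 3 → ℝ) → Fin 3 → ℝ) : Matrix (Fin 2) (Fin 2) ℂ :=
  A0 w + (Complex.I / 2) • ∑ α, Dsigma w α α

/-- The contravariant metric written out. -/
lemma gM_explicit (w : (Fin 3 → ℝ) → Fin 3 → ℝ) (x : Fin 3 → ℝ) :
    gM w x = !![1 + w x 2 ^ 2 + w x 1 ^ 2, -(w x 0 * w x 1), -(w x 0 * w x 2);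
      -(w x 0 * w x 1), 1 + w x 2 ^ 2 + w x 0 ^ 2, -(w x 1 * w x 2);
      -(w x 0 * w x 2), -(w x 1 * w x 2), 1 + w x 1 ^ 2 + w x 0 ^ 2] := by
  ext a b
  fin_cases a <;> fin_cases b <;> simp [gM, Emat, Fin.sum_univ_three] <;> ring

/-- Entries of the covariant metric are differentiable functions of the microrotations. -/
lemma glM_id_diff (a b : Fin 3) :
    DifferentiableAt ℝ (fun v : Fin 3 → ℝ => glM (fun u => u) v a b) 0 := by
  have hd : DifferentiableAt ℝ (fun v : Fin 3 → ℝ => (gM (fun u => u) v).det) 0 := by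
    simp only [gM_explicit, Matrix.det_fin_three]
    simp
    fun_prop
  have hn : (gM (fun u => u) (0 : Fin 3 → ℝ)).det ≠ 0 := by
    simp [gM_explicit, Matrix.det_fin_three]
  have ha : DifferentiableAt ℝ (fun v : Fin 3 → ℝ => (gM (fun u => u) v).adjugate a b) 0 := by
    simp only [gM_explicit, Matrix.adjugate_fin_three]
    fin_cases a <;> fin_cases b <;> simp <;> fun_prop
  simp only [glM, Matrix.inv_def, Ring.inverse_eq_inv', Matrix.smul_apply, smul_eq_mul]
  exact (hd.inv hn).mul ha

/-- The covariant metric is even in the microrotations, so its first derivative vanishes. -/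
lemma glM_id_fderiv (a b : Fin 3) :
    fderiv ℝ (fun v : Fin 3 → ℝ => glM (fun u => u) v a b) 0 = 0 := by
  have he : (fun v : Fin 3 → ℝ => glM (fun u => u) (-v) a b)
      = (fun v : Fin 3 → ℝ => glM (fun u => u) v a b) := by
    funext v
    simp [glM, gM_explicit]
  have hF : HasFDerivAt (fun v : Fin 3 → ℝ => glM (fun u => u) v a b)
      (fderiv ℝ (fun v : Fin 3 → ℝ => glM (fun u => u) v a b) 0) (-0 : Fin 3 → ℝ) := by
    rw [neg_zero]
    exact (glM_id_diff a b).hasFDerivAt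
  have h := (hF.comp (0 : Fin 3 → ℝ) (hasFDerivAt_id (𝕜 := ℝ) (0 : Fin 3 → ℝ)).neg).fderiv
  change fderiv ℝ (fun v : Fin 3 → ℝ => glM (fun u => u) (-v) a b) 0 = _ at h
  rw [he] at h
  ext v
  have h2 := congrArg (fun L => L v) h
  simp at h2 ⊢
  linarith

lemma pdR_glM (w : (Fin 3 → ℝ) → Fin 3 → ℝ) (hw : DifferentiableAt ℝ w 0) (hw0 : w 0 = 0)
    (a b c : Fin 3) : pdR (fun y => glM w y a b) c = 0 := by
  have h1 : HasFDerivAt (fun v : Fin 3 → ℝ => glM (fun u => u) v a b)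
      (0 : (Fin 3 → ℝ) →L[ℝ] ℝ) (w 0) := by
    rw [hw0, ← glM_id_fderiv a b]
    exact (glM_id_diff a b).hasFDerivAt
  have h2 := h1.comp 0 hw.hasFDerivAt
  have h3 : (fun y => glM w y a b) = (fun v : Fin 3 → ℝ => glM (fun u => u) v a b) ∘ w := by
    funext y
    simp [glM, gM_explicit]
  rw [pdR, h3, h2.fderiv]
  simp

lemma christoffel_zero (w : (Fin 3 → ℝ) → Fin 3 → ℝ) (hw : DifferentiableAt ℝ w 0)
    (hw0 : w 0 = 0) (a b c : Fin 3) : christoffel w a b c = 0 := by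
  simp [christoffel, pdR_glM w hw hw0]

lemma sigma_zero (w : (Fin 3 → ℝ) → Fin 3 → ℝ) (hw0 : w 0 = 0) (a : Fin 3) :
    sigma' w 0 a = pauli a := by
  fin_cases a <;> simp [sigma', Emat, hw0, Fin.sum_univ_three]

lemma sigmaLow_zero (w : (Fin 3 → ℝ) → Fin 3 → ℝ) (hw0 : w 0 = 0) (a : Fin 3) :
    sigmaLow w 0 a = pauli a := by
  have h : glM w 0 = 1 := by
    have : gM w 0 = 1 := by
      rw [gM_explicit]
      ext i j
      fin_cases i <;> fin_cases j <;> simp [hw0]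
    simp [glM, this]
  fin_cases a <;> simp [sigmaLow, h, sigma_zero w hw0, Fin.sum_univ_three, Matrix.one_apply]

lemma pdR_Emat (w : (Fin 3 → ℝ) → Fin 3 → ℝ) (a j b : Fin 3) :
    pdR (fun y => Emat w y j b) a =
      (!![0, pdR (fun y => w y 2) a, -pdR (fun y => w y 1) a;
        -pdR (fun y => w y 2) a, 0, pdR (fun y => w y 0) a;
        pdR (fun y => w y 1) a, -pdR (fun y => w y 0) a, 0] : Matrix (Fin 3) (Fin 3) ℝ) j b := by
  fin_cases j <;> fin_cases b <;> simp [pdR, Emat, fderiv_fun_neg]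

lemma Emat_diff (w : (Fin 3 → ℝ) → Fin 3 → ℝ) (hw : DifferentiableAt ℝ w 0) (j b : Fin 3) :
    DifferentiableAt ℝ (fun y => Emat w y j b) 0 := by
  have h := fun i => differentiableAt_pi.mp hw i
  fin_cases j <;> fin_cases b <;> simp [Emat] <;> fun_prop

lemma Dsigma_eq (w : (Fin 3 → ℝ) → Fin 3 → ℝ) (hw : DifferentiableAt ℝ w 0) (a b : Fin 3) :
    Dsigma w a b = ∑ j, ((pdR (fun y => Emat w y j b) a : ℝ) : ℂ) • pauli j := by
  ext k l
  have h : HasFDerivAt (fun y => ∑ j, ((Emat w y j b : ℝ) : ℂ) * pauli j k l)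
      (∑ j, (Complex.ofRealCLM.comp (fderiv ℝ (fun y => Emat w y j b) 0)).smulRight
        (pauli j k l)) 0 := by
    refine HasFDerivAt.fun_sum fun j _ => ?_
    have h1 : HasFDerivAt (fun y => ((Emat w y j b : ℝ) : ℂ))
        (Complex.ofRealCLM.comp (fderiv ℝ (fun y => Emat w y j b) 0)) 0 :=
      Complex.ofRealCLM.hasFDerivAt.comp 0 (Emat_diff w hw j b).hasFDerivAt
    exact h1.smul_const (pauli j k l)
  have h2 : (fun y => sigma' w y b k l)
      = (fun y => ∑ j, ((Emat w y j b : ℝ) : ℂ) * pauli j k l) := by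
    funext y
    simp [sigma', Matrix.sum_apply]
  simp only [Dsigma, Matrix.of_apply, pdC]
  rw [h2, h.fderiv]
  simp [Matrix.sum_apply, pdR]

/-- for the frame given by the linearized orthogonal matrix with microrotation
vector w, the subprincipal symbol of the massless Dirac operator at the origin equals
−(1/2)(div w)(0)·I. -/
theorem subprincipal_symbol_eq_neg_half_div_microrotation
    (U : Set (Fin 3 → ℝ)) (hU : IsOpen U) (h0 : (0 : Fin 3 → ℝ) ∈ U)
    (w : (Fin 3 → ℝ) → Fin 3 → ℝ)
    (hw : ∀ x ∈ U, DifferentiableAt ℝ w x) (hw0 : w 0 = 0)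
    (hinv : ∀ x ∈ U, IsUnit (Emat w x).det) :
    Asub w = (((-(1 / 2) * ∑ α, pdR (fun y => w y α) α : ℝ)) : ℂ)
        • (1 : Matrix (Fin 2) (Fin 2) ℂ) := by
  have hd := hw 0 h0
  simp only [Asub, A0, christoffel_zero w hd hw0, sigma_zero w hw0, sigmaLow_zero w hw0,
    Dsigma_eq w hd, pdR_Emat]
  generalize hq : (fun i a => pdR (fun y => w y i) a) = q
  have hq' : ∀ i a, pdR (fun y => w y i) a = q i a := fun i a => by rw [← hq]
  simp only [hq']
  ext k l
  fin_cases k <;> fin_cases l <;>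
    simp [pauli, Fin.sum_univ_three] <;> ring_nf <;>
    simp only [Complex.I_sq, Complex.I_pow_three, Complex.I_pow_four] <;> ring

end
end

section
/- Let U ⊆ ℝ³ be an open neighbourhood of 0, let w : U → ℝ³ be differentiable with w(0) = 0, and define the frame e_j^α(x) as the entries of the matrix E(x) := [[1, w³(x), −w²(x)], [−w³(x), 1, w¹(x)], [w²(x), −w¹(x), 1]] (the j-th row of E(x) being e_j(x)), assumed pointwise invertible on U. Let the coframe e^k be defined by Σ_α e_j^α e^k_α = δ_j^k, let g^{αβ} := Σ_j e_j^α e_j^β with inverse g_{αβ}, define (curl e^j)_β := (1/2) √(det g_{μν}) Σ_{γ,δ,μ,ν} ε_{γδβ} g^{γμ} g^{δν} (∂e^j_ν/∂x^μ − ∂e^j_μ/∂x^ν), and set *T^α_β := Σ_j e_j^α (curl e^j)_β. Then at the origin: *T^α_β(0) = ∂w^β/∂x^α(0) − δ^α_β (div w)(0), where div w = Σ_γ ∂w^γ/∂x^γ. -/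
open Matrix BigOperators

noncomputable section

/-- The totally antisymmetric symbol ε on three indices, ε₀₁₂ = 1. -/
def eps (i j k : Fin 3) : ℝ :=
  ((((j : ℤ) - (i : ℤ)) * (((k : ℤ) - (j : ℤ))) * (((k : ℤ) - (i : ℤ))) : ℤ) : ℝ) / 2

/-- (curl e^j)_β at the origin, for a coframe f (f x k α = e^k_α(x)). -/
def curlCoframe (w : (Fin 3 → ℝ) → Fin 3 → ℝ) (f : (Fin 3 → ℝ) → Fin 3 → Fin 3 → ℝ)
    (j β : Fin 3) : ℝ :=
  (1 / 2) * Real.sqrt ((gM w 0)⁻¹.det) *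
    ∑ γ, ∑ δ, ∑ μ, ∑ ν, eps γ δ β * gM w 0 γ μ * gM w 0 δ ν *
      (pdR (fun y => f y j ν) μ - pdR (fun y => f y j μ) ν)

theorem coframe_formula (f : Fin 3 → Fin 3 → ℝ) (w : Fin 3 → ℝ)
    (hf : ∀ j k, ∑ α, (!![1, w 2, -(w 1); -(w 2), 1, w 0; w 1, -(w 0), 1] :
      Matrix (Fin 3) (Fin 3) ℝ) j α * f k α = if j = k then (1 : ℝ) else 0) (k α : Fin 3) :
    f k α = ((!![1, w 2, -(w 1); -(w 2), 1, w 0; w 1, -(w 0), 1] :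
      Matrix (Fin 3) (Fin 3) ℝ) k α + w k * w α) *
      (1 + (w 0 * w 0 + w 1 * w 1 + w 2 * w 2))⁻¹ := by
  have hN : (1 + (w 0 * w 0 + w 1 * w 1 + w 2 * w 2)) ≠ 0 := by
    nlinarith [mul_self_nonneg (w 0), mul_self_nonneg (w 1), mul_self_nonneg (w 2)]
  rw [eq_mul_inv_iff_mul_eq₀ hN]
  have h0 := hf 0 k
  have h1 := hf 1 k
  have h2 := hf 2 k
  fin_cases k <;> fin_cases α <;> simp [Fin.sum_univ_three] at h0 h1 h2 ⊢ <;>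
  first
  | linear_combination (1 + w 0 * w 0) * h0 + (w 0 * w 1 - w 2) * h1 + (w 0 * w 2 + w 1) * h2
  | linear_combination (w 0 * w 1 + w 2) * h0 + (1 + w 1 * w 1) * h1 + (w 1 * w 2 - w 0) * h2
  | linear_combination (w 0 * w 2 - w 1) * h0 + (w 1 * w 2 + w 0) * h1 + (1 + w 2 * w 2) * h2

theorem pdR_coframe
    (U : Set (Fin 3 → ℝ)) (hU : IsOpen U) (h0 : (0 : Fin 3 → ℝ) ∈ U)
    (w : (Fin 3 → ℝ) → Fin 3 → ℝ)
    (hw : DifferentiableAt ℝ w 0) (hw0 : w 0 = 0)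
    (f : (Fin 3 → ℝ) → Fin 3 → Fin 3 → ℝ)
    (hf : ∀ x ∈ U, ∀ j k, ∑ α, Emat w x j α * f x k α = if j = k then (1 : ℝ) else 0)
    (k α μ : Fin 3) :
    pdR (fun y => f y k α) μ = pdR (fun y => Emat w y k α) μ := by
  have hd : ∀ i, HasFDerivAt (fun y => w y i) (fderiv ℝ (fun y => w y i) 0) 0 := fun i =>
    (differentiableAt_pi.1 hw i).hasFDerivAt
  have hz : ∀ i, w 0 i = 0 := fun i => by rw [hw0]; rfl
  have hq : ∀ i j, HasFDerivAt (fun y => w y i * w y j) (0 : (Fin 3 → ℝ) →L[ℝ] ℝ) 0 := by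
    intro i j
    simpa [hz] using (hd i).fun_mul (hd j)
  have hE : DifferentiableAt ℝ (fun y => Emat w y k α) 0 := by
    have := fun i => (hd i).differentiableAt
    fin_cases k <;> fin_cases α <;> simp [Emat] <;> apply this
  have hN : HasFDerivAt (fun y => (1 + (w y 0 * w y 0 + w y 1 * w y 1 + w y 2 * w y 2))⁻¹)
      (0 : (Fin 3 → ℝ) →L[ℝ] ℝ) 0 := by
    have h1 := ((((hq 0 0).fun_add (hq 1 1)).fun_add (hq 2 2)).const_add 1)
    have h2 := (hasDerivAt_inv (x := (1 + (w 0 0 * w 0 0 + w 0 1 * w 0 1 + w 0 2 * w 0 2)))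
      (by simp [hz])).comp_hasFDerivAt (0 : Fin 3 → ℝ) h1
    simpa [Function.comp_def] using h2
  have hT := (hE.hasFDerivAt.fun_add (hq k α)).fun_mul hN
  have he : (fun y => f y k α) =ᶠ[nhds 0] fun y => (Emat w y k α + w y k * w y α) *
      (1 + (w y 0 * w y 0 + w y 1 * w y 1 + w y 2 * w y 2))⁻¹ := by
    filter_upwards [hU.mem_nhds h0] with y hy
    exact coframe_formula (f y) (w y) (hf y hy) k α
  unfold pdR
  rw [he.fderiv_eq, hT.fderiv]
  simp [hz]

theorem pdR_neg (g : (Fin 3 → ℝ) → ℝ) (μ : Fin 3) :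
    pdR (fun y => -g y) μ = -pdR g μ := by
  simp [pdR, fderiv_fun_neg]

theorem pdR_one (μ : Fin 3) : pdR (fun _ => (1 : ℝ)) μ = 0 := by
  simp [pdR]

/-- the microrotation formula for the Hodge-dualized torsion
*T^α_β(0) = ∂w^β/∂x^α(0) − δ^α_β (div w)(0). -/
theorem star_torsion_microrotation_formula
    (U : Set (Fin 3 → ℝ)) (hU : IsOpen U) (h0 : (0 : Fin 3 → ℝ) ∈ U)
    (w : (Fin 3 → ℝ) → Fin 3 → ℝ)
    (hw : ∀ x ∈ U, DifferentiableAt ℝ w x) (hw0 : w 0 = 0)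
    (hinv : ∀ x ∈ U, IsUnit (Emat w x).det)
    (f : (Fin 3 → ℝ) → Fin 3 → Fin 3 → ℝ)
    (hf : ∀ x ∈ U, ∀ j k, ∑ α, Emat w x j α * f x k α = if j = k then (1 : ℝ) else 0) :
    ∀ α β : Fin 3,
      ∑ j, Emat w 0 j α * curlCoframe w f j β
        = pdR (fun y => w y β) α
          - (if α = β then (1 : ℝ) else 0) * ∑ γ, pdR (fun y => w y γ) γ := by
  have hz : ∀ i, w 0 i = 0 := fun i => by rw [hw0]; rfl
  have hE0 : Emat w 0 = 1 := by
    ext i j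
    fin_cases i <;> fin_cases j <;> simp [Emat, hz]
  have hg : gM w 0 = 1 := by
    ext i j
    simp [gM, hE0, Matrix.one_apply, eq_comm]
  have hc := pdR_coframe U hU h0 w (hw 0 h0) hw0 f hf
  intro α β
  have hs : ∑ j, Emat w 0 j α * curlCoframe w f j β = curlCoframe w f α β := by
    simp [hE0, Matrix.one_apply]
  rw [hs]
  have hcurl : curlCoframe w f α β = (1 / 2) * ∑ γ, ∑ δ, eps γ δ β *
      (pdR (fun y => Emat w y α δ) γ - pdR (fun y => Emat w y α γ) δ) := by
    simp [curlCoframe, hg, hc, Matrix.one_apply]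
  rw [hcurl]
  fin_cases α <;> fin_cases β <;>
    simp [Fin.sum_univ_three, eps, Emat, pdR_neg, pdR_one] <;> ring

end
end
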